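/- arXiv:1311.3454 — 5 statements merged into one kernel-verified Lean document; each statement's English description precedes it below -/
import Mathlib

section
/- Let X and Y be real Banach spaces, let r > 0, and let H : X → Y be a map which is Fréchet differentiable at every point of the closed ball B_r(0) ⊆ X, with derivative H'(U) ∈ L(X,Y), such that the derivative is Lipschitz on B_r(0): ‖H'(U₁) − H'(U₂)‖ ≤ L‖U₁ − U₂‖ for all U₁, U₂ ∈ B_r(0). Suppose there exists a continuous linear operator A : Y → X that is a two-sided inverse of H'(0), and set M = ‖A‖ and Λ = ‖A(H(0))‖. If λ := MΛL < 1/4 and Λt₀ ≤ r, where t₀ is the least root of λt² − t + 1 = 0 (with t₀ = 1 when λ = 0), then the equation H(U) = 0 has exactly one solution U* in the closed ball of radius Λt₀ centered at 0. -/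
open Metric

/-- Modified Newton's method (Kantorovich-type theorem): uniqueness of a zero of `H`
in the closed ball of radius `Λ * t₀`. -/
theorem newton_unique_zero
    {X Y : Type*} [NormedAddCommGroup X] [NormedSpace ℝ X] [CompleteSpace X]
    [NormedAddCommGroup Y] [NormedSpace ℝ Y] [CompleteSpace Y]
    (r L : ℝ) (hr : 0 < r)
    (H : X → Y) (H' : X → X →L[ℝ] Y)
    (hdiff : ∀ U ∈ closedBall (0 : X) r, HasFDerivAt H (H' U) U)
    (hLip : ∀ U₁ ∈ closedBall (0 : X) r, ∀ U₂ ∈ closedBall (0 : X) r,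
      ‖H' U₁ - H' U₂‖ ≤ L * ‖U₁ - U₂‖)
    (A : Y →L[ℝ] X)
    (hA_left : ∀ y : Y, H' 0 (A y) = y)
    (hA_right : ∀ x : X, A (H' 0 x) = x)
    (M Λ lam t₀ : ℝ)
    (hM : M = ‖A‖) (hΛ : Λ = ‖A (H 0)‖)
    (hlam : lam = M * Λ * L)
    (hlam_lt : lam < 1 / 4)
    (ht₀ : t₀ = if lam = 0 then 1 else (1 - Real.sqrt (1 - 4 * lam)) / (2 * lam))
    (hball : Λ * t₀ ≤ r) :
    ∃! U : X, U ∈ closedBall (0 : X) (Λ * t₀) ∧ H U = 0 := by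
  rcases subsingleton_or_nontrivial X with hX | hX
  · have hY : ∀ y : Y, y = 0 := fun y => by
      rw [← hA_left y, Subsingleton.elim (A y) 0, map_zero]
    have h0 : Λ = 0 := by rw [hΛ, Subsingleton.elim (A (H 0)) 0, norm_zero]
    refine ⟨0, ⟨?_, hY _⟩, fun y _ => Subsingleton.elim _ _⟩
    simp [h0]
  have hL : 0 ≤ L := by
    obtain ⟨x, hx⟩ := exists_norm_eq X hr.le
    have h := hLip x (by simp [hx]) 0 (by simp [hr.le])
    have h2 := (norm_nonneg _).trans h
    rw [sub_zero, hx] at h2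
    exact nonneg_of_mul_nonneg_left h2 hr
  have hM0 : 0 ≤ M := hM ▸ norm_nonneg _
  have hΛ0 : 0 ≤ Λ := hΛ ▸ norm_nonneg _
  have hlam0 : 0 ≤ lam := by rw [hlam]; positivity
  have key : lam * t₀ ^ 2 + 1 = t₀ ∧ lam * t₀ ≤ 1 / 2 ∧ 0 ≤ t₀ := by
    by_cases h : lam = 0
    · rw [if_pos h] at ht₀
      rw [h, ht₀]; norm_num
    · rw [if_neg h] at ht₀
      have hpos : 0 < lam := lt_of_le_of_ne hlam0 (Ne.symm h)
      have hs := Real.sq_sqrt (show 0 ≤ 1 - 4 * lam by linarith)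
      have hs0 := Real.sqrt_nonneg (1 - 4 * lam)
      set q := Real.sqrt (1 - 4 * lam)
      have e : lam * t₀ = (1 - q) / 2 := by rw [ht₀]; field_simp
      have e2 : lam * t₀ ^ 2 + 1 = t₀ := by
        apply mul_left_cancel₀ h
        have : lam * (lam * t₀ ^ 2 + 1) = (lam * t₀) ^ 2 + lam := by ring
        rw [this, e]; nlinarith
      refine ⟨e2, by rw [e]; linarith, ?_⟩
      rw [← e2]; positivity
  obtain ⟨k1, k2, k3⟩ := key
  have hR0 : 0 ≤ Λ * t₀ := by positivity
  have hsub : closedBall (0 : X) (Λ * t₀) ⊆ closedBall 0 r := closedBall_subset_closedBall hball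
  set G : X → X := fun U => U - A (H U) with hG
  have hlip : ∀ x ∈ closedBall (0 : X) (Λ * t₀), ∀ y ∈ closedBall (0 : X) (Λ * t₀),
      ‖G y - G x‖ ≤ lam * t₀ * ‖y - x‖ := by
    intro x hx y hy
    refine (convex_closedBall (0 : X) (Λ * t₀)).norm_image_sub_le_of_norm_hasFDerivWithin_le
      (f' := fun U => ContinuousLinearMap.id ℝ X - A.comp (H' U)) (fun U hU => ?_)
      (fun U hU => ?_) hx hy
    · exact ((hasFDerivAt_id U).sub
        (A.hasFDerivAt.comp U (hdiff U (hsub hU)))).hasFDerivWithinAt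
    · have e : ContinuousLinearMap.id ℝ X - A.comp (H' U) = A.comp (H' 0 - H' U) := by
        ext v; simp [hA_right]
      simp only [e]
      have h1 := hLip 0 (by simp [hr.le]) U (hsub hU)
      rw [zero_sub, norm_neg] at h1
      have h2 : ‖U‖ ≤ Λ * t₀ := by simpa using hU
      calc ‖A.comp (H' 0 - H' U)‖ ≤ ‖A‖ * ‖H' 0 - H' U‖ := A.opNorm_comp_le _
        _ ≤ M * (L * (Λ * t₀)) := by
          rw [hM]
          gcongr
          exact h1.trans (by gcongr)
        _ = lam * t₀ := by rw [hlam]; ring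
  have h0mem : (0 : X) ∈ closedBall (0 : X) (Λ * t₀) := by simpa using hR0
  have hmaps : Set.MapsTo G (closedBall (0 : X) (Λ * t₀)) (closedBall (0 : X) (Λ * t₀)) := by
    intro U hU
    have h1 := hlip 0 h0mem U hU
    have h2 : ‖U‖ ≤ Λ * t₀ := by simpa using hU
    have h3 : ‖G 0‖ = Λ := by simp [hG, hΛ]
    rw [mem_closedBall_zero_iff]
    calc ‖G U‖ = ‖(G U - G 0) + G 0‖ := by rw [sub_add_cancel]
      _ ≤ ‖G U - G 0‖ + ‖G 0‖ := norm_add_le _ _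
      _ ≤ lam * t₀ * (Λ * t₀) + Λ := by
        rw [h3]
        rw [sub_zero] at h1
        have : lam * t₀ * ‖U‖ ≤ lam * t₀ * (Λ * t₀) := by gcongr
        linarith
      _ = Λ * (lam * t₀ ^ 2 + 1) := by ring
      _ = Λ * t₀ := by rw [k1]
  have hfix : ∀ U, G U = U ↔ H U = 0 := by
    intro U
    simp only [hG, sub_eq_self]
    refine ⟨fun h => ?_, fun h => by rw [h, map_zero]⟩
    rw [← hA_left (H U), h, map_zero]
  have hc : ContractingWith ⟨lam * t₀, by positivity⟩
      (hmaps.restrict G (closedBall (0 : X) (Λ * t₀)) (closedBall (0 : X) (Λ * t₀))) := by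
    refine ⟨?_, LipschitzWith.of_dist_le_mul fun x y => ?_⟩
    · apply NNReal.coe_lt_coe.1
      change lam * t₀ < 1
      linarith
    · have := hlip y y.2 x x.2
      rw [← dist_eq_norm, ← dist_eq_norm] at this
      exact this
  obtain ⟨U, hU, hUf, -⟩ := hc.exists_fixedPoint' isClosed_closedBall.isComplete hmaps h0mem
    (edist_ne_top _ _)
  refine ⟨U, ⟨hU, (hfix U).1 hUf⟩, ?_⟩
  rintro V ⟨hV, hV0⟩
  have h1 := hlip U hU V hV
  rw [(hfix V).2 hV0, show G U = U from hUf] at h1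
  have h2 : lam * t₀ * ‖V - U‖ ≤ 1 / 2 * ‖V - U‖ := by gcongr
  have h3 := norm_nonneg (V - U)
  exact sub_eq_zero.1 (norm_eq_zero.1 (by linarith))
end

section
/- Let X and Y be real Banach spaces, let r > 0, and let H : X → Y be Fréchet differentiable at every point of the closed ball B_r(0) ⊆ X with ‖H'(U₁) − H'(U₂)‖ ≤ L‖U₁ − U₂‖ for all U₁, U₂ ∈ B_r(0). Suppose there exists a continuous linear operator A : Y → X that is a two-sided inverse of H'(0), set M = ‖A‖, Λ = ‖A(H(0))‖, and assume λ := MΛL < 1/4 and Λt₀ ≤ r with t₀ the least root of λt² − t + 1 = 0 (t₀ = 1 when λ = 0). Then the modified Newton sequence defined by U₀ = 0 and U_{n+1} = U_n − A(H(U_n)) is well defined, every U_n lies in the closed ball of radius Λt₀ centered at 0, and U_n converges in norm to a point U* in that ball satisfying H(U*) = 0. -/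
open Metric Filter

/-- Modified Newton's method: the iterates `U₀ = 0`, `U_{n+1} = U_n - A (H (U_n))`
stay in the closed ball of radius `Λ * t₀` and converge to a zero of `H` in that ball. -/
theorem newton_iterates_converge
    {X Y : Type*} [NormedAddCommGroup X] [NormedSpace ℝ X] [CompleteSpace X]
    [NormedAddCommGroup Y] [NormedSpace ℝ Y] [CompleteSpace Y]
    (r L : ℝ) (hr : 0 < r)
    (H : X → Y) (H' : X → X →L[ℝ] Y)
    (hdiff : ∀ U ∈ closedBall (0 : X) r, HasFDerivAt H (H' U) U)
    (hLip : ∀ U₁ ∈ closedBall (0 : X) r, ∀ U₂ ∈ closedBall (0 : X) r,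
      ‖H' U₁ - H' U₂‖ ≤ L * ‖U₁ - U₂‖)
    (A : Y →L[ℝ] X)
    (hA_left : ∀ y : Y, H' 0 (A y) = y)
    (hA_right : ∀ x : X, A (H' 0 x) = x)
    (M Λ lam t₀ : ℝ)
    (hM : M = ‖A‖) (hΛ : Λ = ‖A (H 0)‖)
    (hlam : lam = M * Λ * L)
    (hlam_lt : lam < 1 / 4)
    (ht₀ : t₀ = if lam = 0 then 1 else (1 - Real.sqrt (1 - 4 * lam)) / (2 * lam))
    (hball : Λ * t₀ ≤ r)
    (U : ℕ → X) (hU0 : U 0 = 0)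
    (hUrec : ∀ n : ℕ, U (n + 1) = U n - A (H (U n))) :
    (∀ n : ℕ, U n ∈ closedBall (0 : X) (Λ * t₀)) ∧
    ∃ Ustar ∈ closedBall (0 : X) (Λ * t₀),
      Tendsto U atTop (nhds Ustar) ∧ H Ustar = 0 := by
  have hA0 : ∀ y : Y, A y = 0 → y = 0 := by
    intro y hy
    rw [← hA_left y, hy, map_zero]
  have h0r : (0 : X) ∈ closedBall (0 : X) r := by simp [hr.le]
  by_cases hz : A (H 0) = 0
  · have hΛ0 : Λ = 0 := by rw [hΛ, hz, norm_zero]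
    have hU : ∀ n, U n = 0 := by
      intro n
      induction n with
      | zero => exact hU0
      | succ k ih => rw [hUrec, ih, hz, sub_zero]
    refine ⟨fun n => by simp [hU n, hΛ0], 0, by simp [hΛ0], ?_, hA0 _ hz⟩
    have : U = fun _ => 0 := funext hU
    rw [this]
    exact tendsto_const_nhds
  have hΛpos : 0 < Λ := by rw [hΛ]; exact norm_pos_iff.mpr hz
  have hM0 : 0 ≤ M := by rw [hM]; exact norm_nonneg _
  have hL0 : 0 ≤ L := by
    set v : X := (r / Λ) • A (H 0) with hv
    have hvn : ‖v‖ = r := by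
      rw [hv, norm_smul, ← hΛ, Real.norm_of_nonneg (by positivity)]
      field_simp
    have h1 := hLip v (by simp [hvn]) 0 h0r
    rw [sub_zero v, hvn] at h1
    have h2 : 0 ≤ L * r := le_trans (norm_nonneg _) h1
    exact nonneg_of_mul_nonneg_left h2 hr
  have hlam0 : 0 ≤ lam := by rw [hlam]; positivity
  -- properties of the root
  have hroot : lam * t₀ ^ 2 - t₀ + 1 = 0 ∧ lam * t₀ ≤ 1 / 2 := by
    by_cases h : lam = 0
    · rw [if_pos h] at ht₀
      rw [ht₀, h]; norm_num
    · rw [if_neg h] at ht₀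
      have hs := Real.sq_sqrt (show 0 ≤ 1 - 4 * lam by linarith)
      have hs0 := Real.sqrt_nonneg (1 - 4 * lam)
      set s := Real.sqrt (1 - 4 * lam)
      have h2 : 2 * (lam * t₀) = 1 - s := by rw [ht₀]; field_simp
      refine ⟨?_, by linarith⟩
      have h3 : lam * (lam * t₀ ^ 2 - t₀ + 1) = 0 := by
        have h4 : lam * t₀ = (1 - s) / 2 := by linarith
        have : lam * (lam * t₀ ^ 2 - t₀ + 1) = (lam * t₀) ^ 2 - lam * t₀ + lam := by ring
        rw [this, h4]; nlinarith
      exact (mul_eq_zero.mp h3).resolve_left h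
  obtain ⟨hroot, hhalf⟩ := hroot
  have ht0 : 1 ≤ t₀ := by nlinarith [mul_nonneg hlam0 (sq_nonneg t₀)]
  set R := Λ * t₀ with hR
  have hR0 : 0 ≤ R := by positivity
  have hsub : closedBall (0 : X) R ⊆ closedBall 0 r := closedBall_subset_closedBall hball
  have h0R : (0 : X) ∈ closedBall (0 : X) R := by simp [hR0]
  have hcontr : ∀ x ∈ closedBall (0 : X) R, ∀ y ∈ closedBall (0 : X) R,
      ‖(y - A (H y)) - (x - A (H x))‖ ≤ (1 / 2 : ℝ) * ‖y - x‖ ∧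
      ‖(y - A (H y)) - (x - A (H x))‖ ≤ (lam * t₀) * ‖y - x‖ := by
    intro x hx y hy
    have key : ‖(y - A (H y)) - (x - A (H x))‖ ≤ (lam * t₀) * ‖y - x‖ := by
      refine Convex.norm_image_sub_le_of_norm_hasFDerivWithin_le
        (f := fun z => z - A (H z))
        (f' := fun z => ContinuousLinearMap.id ℝ X - A.comp (H' z))
        (s := closedBall (0 : X) R) ?_ ?_ (convex_closedBall _ _) hx hy
      · intro z hz
        exact ((hasFDerivAt_id z).sub
          (A.hasFDerivAt.comp z (hdiff z (hsub hz)))).hasFDerivWithinAt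
      · intro z hz
        have he : ContinuousLinearMap.id ℝ X - A.comp (H' z) = A.comp (H' 0 - H' z) := by
          ext w
          simp [hA_right]
        rw [he]
        have hzR : ‖z‖ ≤ R := by simpa using hz
        have h1 := hLip 0 h0r z (hsub hz)
        rw [zero_sub, norm_neg] at h1
        calc ‖A.comp (H' 0 - H' z)‖ ≤ ‖A‖ * ‖H' 0 - H' z‖ := A.opNorm_comp_le _
          _ ≤ M * (L * R) := by
            rw [← hM]
            exact mul_le_mul_of_nonneg_left
              (h1.trans (mul_le_mul_of_nonneg_left hzR hL0)) hM0
          _ = lam * t₀ := by rw [hlam, hR]; ring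
    exact ⟨key.trans (mul_le_mul_of_nonneg_right hhalf (norm_nonneg _)), key⟩
  have hmem : ∀ n, U n ∈ closedBall (0 : X) R := by
    intro n
    induction n with
    | zero => rw [hU0]; exact h0R
    | succ k ih =>
      have h1 := (hcontr 0 h0R _ ih).2
      rw [← hUrec, sub_zero (U k)] at h1
      have hk : ‖U k‖ ≤ R := by simpa using ih
      have h2 : ‖U (k + 1)‖ ≤ ‖U (k + 1) - (0 - A (H 0))‖ + ‖(0 : X) - A (H 0)‖ := by
        simpa only [sub_add_cancel] using norm_add_le (U (k + 1) - (0 - A (H 0))) (0 - A (H 0))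
      rw [zero_sub, norm_neg, ← hΛ] at h2
      rw [zero_sub] at h1
      have h3 : lam * t₀ * ‖U k‖ ≤ lam * t₀ * R :=
        mul_le_mul_of_nonneg_left hk (by positivity)
      have h4 : lam * t₀ * R + Λ = R := by
        have : lam * t₀ * R + Λ - R = Λ * (lam * t₀ ^ 2 - t₀ + 1) := by rw [hR]; ring
        rw [hroot, mul_zero] at this
        linarith
      rw [mem_closedBall_zero_iff]
      linarith
  have hgeo : ∀ n, dist (U n) (U (n + 1)) ≤ Λ * (1 / 2 : ℝ) ^ n := by
    intro n
    induction n with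
    | zero => rw [hUrec, hU0, hΛ]; simp [dist_eq_norm]
    | succ k ih =>
      have h1 := (hcontr _ (hmem (k + 1)) _ (hmem k)).1
      rw [← hUrec, ← hUrec, ← dist_eq_norm, ← dist_eq_norm] at h1
      rw [pow_succ]
      linarith
  obtain ⟨u, hu⟩ := cauchySeq_tendsto_of_complete
    (cauchySeq_of_le_geometric (1 / 2 : ℝ) Λ (by norm_num) hgeo)
  have huR : u ∈ closedBall (0 : X) R :=
    isClosed_closedBall.mem_of_tendsto hu (Eventually.of_forall hmem)
  refine ⟨hmem, u, huR, hu, hA0 _ ?_⟩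
  have hc : Tendsto (fun n => A (H (U n))) atTop (nhds (A (H u))) :=
    (A.continuous.tendsto _).comp ((hdiff u (hsub huR)).continuousAt.tendsto.comp hu)
  have h1 : Tendsto (fun n => U (n + 1)) atTop (nhds (u - A (H u))) := by
    simp only [hUrec]
    exact hu.sub hc
  have h2 := tendsto_nhds_unique h1 (hu.comp (tendsto_add_atTop_nat 1))
  simpa using h2
end

section
/- Let R > 0 and T > 0. Let B : [−R,R] × [0,T] → ℝ be continuously differentiable, such that for each t the function x ↦ B(x,t)∂_x B(x,t) is differentiable in x on (−R,R) with ∂_t B(x,t) = ∂_x( B ∂_x B )(x,t) for all (x,t) ∈ (−R,R) × (0,T), and such that B(−R,t) = 0 for all t ∈ [0,T]. Let η : [0,T] → (−R,R) be differentiable with η'(t) = −∂_x B(η(t), t) for all t ∈ (0,T). Then the mass M(t) = ∫_{−R}^{η(t)} B(x,t) dx is constant on [0,T]. -/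
open Set intervalIntegral

/-- Leibniz rule with a moving upper limit, for jointly continuous integrands. -/
lemma leibniz_aux (a T : ℝ) (C D : ℝ → ℝ → ℝ)
    (hC : Continuous (fun p : ℝ × ℝ => C p.1 p.2))
    (hD : Continuous (fun p : ℝ × ℝ => D p.1 p.2))
    (hCD : ∀ x, ∀ t ∈ Ioo (0:ℝ) T, HasDerivAt (fun t' => C x t') (D x t) t)
    (η : ℝ → ℝ) (η' t : ℝ) (ht : t ∈ Ioo (0:ℝ) T) (hη : HasDerivAt η η' t) :
    HasDerivAt (fun s => ∫ x in a..(η s), C x s) (η' * C (η t) t + ∫ x in a..(η t), D x t) t := by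
  have key := hasStrictFDerivAt_uncurry_coprod (𝕜 := ℝ) (u := (η t, t))
    (f := fun y s => ∫ x in a..y, C x s)
    (f₁ := fun y s => ContinuousLinearMap.toSpanSingleton ℝ (C y s))
    (f₂ := fun y s => ContinuousLinearMap.toSpanSingleton ℝ (∫ x in a..y, D x s)) ?_ ?_ ?_ ?_
  · have h2 : HasDerivAt (fun s => (η s, s)) (η', (1:ℝ)) t := hη.prodMk (hasDerivAt_id t)
    have h3 := HasFDerivAt.comp_hasDerivAt (f := fun s => (η s, s)) t key.hasFDerivAt h2
    refine HasDerivAt.congr_deriv (f := fun s => ∫ x in a..(η s), C x s) h3 ?_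
    change η' • C (η t) t + (1:ℝ) • (∫ x in a..(η t), D x t) = _
    simp
  · refine Filter.Eventually.of_forall fun v => ?_
    have hc : Continuous (fun x => C x v.2) :=
      hC.comp (continuous_id.prodMk continuous_const)
    exact (hc.integral_hasStrictDerivAt a v.1).hasDerivAt.hasFDerivAt
  · have hn : ∀ᶠ v : ℝ × ℝ in nhds (η t, t), v.2 ∈ Ioo (0:ℝ) T :=
      continuous_snd.continuousAt.eventually (isOpen_Ioo.mem_nhds ht)
    filter_upwards [hn] with v hv
    obtain ⟨y, s⟩ := v
    obtain ⟨M, hM⟩ := (isCompact_uIcc.prod (isCompact_Icc (a := (0:ℝ)) (b := T))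
      : IsCompact (uIcc a y ×ˢ Icc (0:ℝ) T)).exists_bound_of_continuousOn hD.continuousOn
    have hc : ∀ s, Continuous (fun x => C x s) := fun s =>
      hC.comp (continuous_id.prodMk continuous_const)
    have hd : ∀ s, Continuous (fun x => D x s) := fun s =>
      hD.comp (continuous_id.prodMk continuous_const)
    have := (hasDerivAt_integral_of_dominated_loc_of_deriv_le (μ := MeasureTheory.volume)
      (a := a) (b := y) (F := fun s x => C x s)
      (F' := fun s x => D x s) (x₀ := s) (s := Ioo 0 T) (bound := fun _ => M)
      (isOpen_Ioo.mem_nhds hv)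
      (Filter.Eventually.of_forall fun s => (hc s).aestronglyMeasurable)
      ((hc s).intervalIntegrable _ _) (hd s).aestronglyMeasurable
      (Filter.Eventually.of_forall fun x hx s hs =>
        hM (x, s) ⟨uIoc_subset_uIcc hx, Ioo_subset_Icc_self hs⟩)
      intervalIntegrable_const
      (Filter.Eventually.of_forall fun x hx s hs => hCD x s hs)).2
    exact this.hasFDerivAt
  · exact ((ContinuousLinearMap.toSpanSingletonCLE (𝕜 := ℝ) (E := ℝ)).continuous.comp
      hC).continuousAt
  · have h : Continuous (fun p : ℝ × ℝ => ∫ x in a..p.1, D x p.2) :=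
      continuous_parametric_intervalIntegral_of_continuous
        (f := fun (p : ℝ × ℝ) x => D x p.2)
        (hD.comp (continuous_snd.prodMk (continuous_snd.comp continuous_fst))) continuous_fst
    exact ((ContinuousLinearMap.toSpanSingletonCLE (𝕜 := ℝ) (E := ℝ)).continuous.comp
      h).continuousAt

/-- Mass conservation: if `B` is a classical solution of the porous medium equation
`∂_t B = ∂_x (B ∂_x B)` on `(-R,R) × (0,T)` vanishing at `x = -R`, and `η` solves the ODE
`η'(t) = -∂_x B(η(t), t)`, then the mass `M(t) = ∫_{-R}^{η(t)} B(x,t) dx` is constant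
on `[0,T]`. -/
theorem mass_conservation
    (R T : ℝ) (hR : 0 < R) (hT : 0 < T)
    (B Bx Bt : ℝ → ℝ → ℝ)
    (hBx : ∀ x ∈ Icc (-R) R, ∀ t ∈ Icc (0:ℝ) T,
      HasDerivAt (fun x' => B x' t) (Bx x t) x)
    (hBt : ∀ x ∈ Icc (-R) R, ∀ t ∈ Icc (0:ℝ) T,
      HasDerivAt (fun t' => B x t') (Bt x t) t)
    (hBcont : ContinuousOn (fun p : ℝ × ℝ => B p.1 p.2) (Icc (-R) R ×ˢ Icc (0:ℝ) T))
    (hBxcont : ContinuousOn (fun p : ℝ × ℝ => Bx p.1 p.2) (Icc (-R) R ×ˢ Icc (0:ℝ) T))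
    (hBtcont : ContinuousOn (fun p : ℝ × ℝ => Bt p.1 p.2) (Icc (-R) R ×ˢ Icc (0:ℝ) T))
    (hpde : ∀ x ∈ Ioo (-R) R, ∀ t ∈ Ioo (0:ℝ) T,
      HasDerivAt (fun x' => B x' t * Bx x' t) (Bt x t) x)
    (hB0 : ∀ t ∈ Icc (0:ℝ) T, B (-R) t = 0)
    (η : ℝ → ℝ)
    (hηmem : ∀ t ∈ Icc (0:ℝ) T, η t ∈ Ioo (-R) R)
    (hηcont : ContinuousOn η (Icc (0:ℝ) T))
    (hη' : ∀ t ∈ Ioo (0:ℝ) T, HasDerivAt η (-(Bx (η t) t)) t) :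
    ∀ t ∈ Icc (0:ℝ) T, (∫ x in (-R)..(η t), B x t) = ∫ x in (-R)..(η 0), B x 0 := by
  have hRR : -R ≤ R := by linarith
  let px : ℝ → ℝ := fun x => (projIcc (-R) R hRR x : ℝ)
  let pt : ℝ → ℝ := fun t => (projIcc 0 T hT.le t : ℝ)
  have hpx : Continuous px := continuous_subtype_val.comp continuous_projIcc
  have hpt : Continuous pt := continuous_subtype_val.comp continuous_projIcc
  have hpxm : ∀ x, px x ∈ Icc (-R) R := fun x => (projIcc (-R) R hRR x).2
  have hptm : ∀ t, pt t ∈ Icc 0 T := fun t => (projIcc 0 T hT.le t).2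
  have hpxe : ∀ x ∈ Icc (-R) R, px x = x := fun x hx => by
    simp only [px, projIcc_of_mem hRR hx]
  have hpte : ∀ t ∈ Icc 0 T, pt t = t := fun t ht => by
    simp only [pt, projIcc_of_mem hT.le ht]
  have hpp : Continuous (fun p : ℝ × ℝ => (px p.1, pt p.2)) :=
    (hpx.comp continuous_fst).prodMk (hpt.comp continuous_snd)
  have hC : Continuous (fun p : ℝ × ℝ => B (px p.1) (pt p.2)) :=
    hBcont.comp_continuous hpp fun p => ⟨hpxm _, hptm _⟩
  have hD : Continuous (fun p : ℝ × ℝ => Bt (px p.1) (pt p.2)) :=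
    hBtcont.comp_continuous hpp fun p => ⟨hpxm _, hptm _⟩
  have hCD : ∀ x, ∀ t ∈ Ioo (0:ℝ) T,
      HasDerivAt (fun t' => B (px x) (pt t')) (Bt (px x) (pt t)) t := by
    intro x t ht
    rw [hpte t (Ioo_subset_Icc_self ht)]
    refine (hBt (px x) (hpxm x) t (Ioo_subset_Icc_self ht)).congr_of_eventuallyEq ?_
    filter_upwards [isOpen_Ioo.mem_nhds ht] with s hs
    rw [hpte s (Ioo_subset_Icc_self hs)]
  have hsub : ∀ t ∈ Icc (0:ℝ) T, uIcc (-R) (η t) ⊆ Icc (-R) R := by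
    intro t ht
    rw [uIcc_of_le (hηmem t ht).1.le]
    exact Icc_subset_Icc_right (hηmem t ht).2.le
  have hM : ∀ t ∈ Icc (0:ℝ) T, (∫ x in (-R)..(η t), B x t) =
      ∫ x in (-R)..(η t), B (px x) (pt t) := by
    intro t ht
    refine integral_congr fun x hx => ?_
    simp only [hpxe x (hsub t ht hx), hpte t ht]
  have h0 : (0:ℝ) ∈ Icc 0 T := ⟨le_rfl, hT.le⟩
  have hder : ∀ t ∈ Ioo (0:ℝ) T,
      HasDerivAt (fun s => ∫ x in (-R)..(η s), B (px x) (pt s)) 0 t := by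
    intro t ht
    have ht' := Ioo_subset_Icc_self ht
    have hη := hηmem t ht'
    have h := leibniz_aux (-R) T (fun x t => B (px x) (pt t)) (fun x t => Bt (px x) (pt t))
      hC hD hCD η _ t ht (hη' t ht)
    convert h using 1
    have e1 : (∫ x in (-R)..(η t), Bt (px x) (pt t)) = ∫ x in (-R)..(η t), Bt x t := by
      refine integral_congr fun x hx => ?_
      simp only [hpxe x (hsub t ht' hx), hpte t ht']
    have hm : MapsTo (fun x : ℝ => (x, t)) (Icc (-R) R) (Icc (-R) R ×ˢ Icc (0:ℝ) T) :=
      fun x hx => ⟨hx, ht'⟩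
    have hcm : ContinuousOn (fun x : ℝ => (x, t)) (Icc (-R) R) :=
      (continuous_id.prodMk continuous_const).continuousOn
    have hb : ContinuousOn (fun x => B x t * Bx x t) (Icc (-R) R) :=
      (hBcont.comp hcm hm).mul (hBxcont.comp hcm hm)
    have hbt : ContinuousOn (fun x => Bt x t) (Icc (-R) R) := hBtcont.comp hcm hm
    have e2 : (∫ x in (-R)..(η t), Bt x t) = B (η t) t * Bx (η t) t - B (-R) t * Bx (-R) t :=
      integral_eq_sub_of_hasDerivAt_of_le hη.1.le
        (hb.mono (Icc_subset_Icc_right hη.2.le))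
        (fun x hx => hpde x ⟨hx.1, hx.2.trans hη.2⟩ t ht)
        ((hbt.mono (hsub t ht')).intervalIntegrable)
    rw [e1, e2]
    simp only [hB0 t ht', hpxe _ (Ioo_subset_Icc_self hη), hpte t ht']
    ring
  have hcont : ContinuousOn (fun s => ∫ x in (-R)..(η s), B (px x) (pt s)) (Icc 0 T) := by
    have h : Continuous (fun p : ℝ × ℝ => ∫ x in (-R)..p.1, B (px x) (pt p.2)) :=
      continuous_parametric_intervalIntegral_of_continuous
        (f := fun (p : ℝ × ℝ) x => B (px x) (pt p.2))
        (hC.comp (continuous_snd.prodMk (continuous_snd.comp continuous_fst))) continuous_fst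
    exact h.comp_continuousOn (hηcont.prodMk continuousOn_id)
  intro t ht
  rw [hM t ht, hM 0 h0]
  rcases ht.1.eq_or_lt with h | h
  · rw [← h]
  · obtain ⟨c, hc, hs⟩ := exists_hasDerivAt_eq_slope _ (fun _ => 0) h
      (hcont.mono (Icc_subset_Icc_right ht.2))
      (fun s hs => hder s ⟨hs.1, hs.2.trans_le ht.2⟩)
    have := hs.symm
    rw [div_eq_zero_iff] at this
    rcases this with h1 | h1
    · linarith
    · linarith
end

section
/- Let t* > 0, R > 0, T > 0 with √12 (T+t*)^{1/3} < R, let x₀ satisfy x₀² < 12 t*^{2/3}, let B be the Barenblatt function B(x,t) = 2(t+t*)^{-1/3} · max(0, 1 − (x²/12)(t+t*)^{-2/3}), let η(t) = x₀((t+t*)/t*)^{1/3}, and let G(x,t) = −x/(3(t+t*)) if x² < 12(t+t*)^{2/3} and G(x,t) = 0 otherwise. For ε > 0 let H_ε : ℝ → ℝ be the piecewise linear regularized Heaviside function with H_ε(s) = 0 for s ≤ −ε, H_ε(s) = (s+ε)/(2ε) for −ε ≤ s ≤ ε, and H_ε(s) = 1 for s ≥ ε, and set u₁^ε(x,t) =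 H_ε(x − η(t)) B(x,t). Then for every continuously differentiable function φ : [−R,R] × [0,T] → ℝ there exists a constant C > 0, independent of ε, such that for all sufficiently small ε > 0, | ∫_{−R}^{R} u₁^ε(x,T) φ(x,T) dx − ∫_{−R}^{R} u₁^ε(x,0) φ(x,0) dx − ∫₀^T ∫_{−R}^{R} u₁^ε(x,t) ( ∂_t φ(x,t) − G(x,t) ∂_x φ(x,t) ) dx dt | ≤ C ε. -/
open Set intervalIntegral

/-- The Barenblatt solution of the porous medium equation. -/
noncomputable def barenblatt (ts x t : ℝ) : ℝ :=
  2 * (t + ts) ^ (-(1:ℝ)/3) * max 0 (1 - x ^ 2 / 12 * (t + ts) ^ (-(2:ℝ)/3))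

/-- The piecewise linear regularized Heaviside function: `0` for `s ≤ -ε`,
`(s+ε)/(2ε)` for `-ε ≤ s ≤ ε`, and `1` for `s ≥ ε`. -/
noncomputable def heavisideReg (ε s : ℝ) : ℝ :=
  max 0 (min 1 ((s + ε) / (2 * ε)))

/-- The velocity field `G(x,t) = -x/(3(t+t*))` inside the support of the Barenblatt
solution and `0` outside; it is an a.e. version of `∂_x B`. -/
noncomputable def Gvel (ts x t : ℝ) : ℝ :=
  if x ^ 2 < 12 * (t + ts) ^ ((2:ℝ)/3) then -x / (3 * (t + ts)) else 0

open MeasureTheory in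
theorem aux_bound (a b y0 δ M : ℝ) (hab : a ≤ b) (hδ : 0 ≤ δ) (hM : 0 ≤ M) (f : ℝ → ℝ)
    (h1 : ∀ y ∈ Icc a b, |f y| ≤ M) (h2 : ∀ y, δ < |y - y0| → f y = 0) :
    |∫ y in a..b, f y| ≤ M * (2 * δ) := by
  have hi : Integrable ((Icc (y0 - δ) (y0 + δ)).indicator (fun _ => M)) volume := by
    rw [integrable_indicator_iff measurableSet_Icc]
    exact integrableOn_const (by simp) (by simp)
  have h3 : ‖∫ y in a..b, f y‖ ≤ ∫ y in a..b, (Icc (y0 - δ) (y0 + δ)).indicator (fun _ => M) y := by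
    apply intervalIntegral.norm_integral_le_of_norm_le hab
    · refine Filter.Eventually.of_forall fun y hy => ?_
      by_cases hm : y ∈ Icc (y0 - δ) (y0 + δ)
      · rw [indicator_of_mem hm]
        exact h1 y ⟨hy.1.le, hy.2⟩
      · rw [indicator_of_notMem hm, h2 y, norm_zero]
        by_contra hc
        push Not at hc
        rw [abs_le] at hc
        exact hm ⟨by linarith, by linarith⟩
    · exact hi.intervalIntegrable
  rw [Real.norm_eq_abs] at h3
  refine h3.trans ?_
  rw [intervalIntegral.integral_of_le hab]
  refine (setIntegral_le_integral hi (Filter.Eventually.of_forall fun y =>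
    indicator_nonneg (fun _ _ => hM) y)).trans ?_
  rw [MeasureTheory.integral_indicator measurableSet_Icc, setIntegral_const]
  simp only [Measure.real, Real.volume_Icc, smul_eq_mul]
  rw [ENNReal.toReal_ofReal (by linarith)]
  apply le_of_eq
  ring

open MeasureTheory in
theorem aux_prod_integrable (a b T : ℝ) (hab : a ≤ b) (hT : 0 ≤ T) (f : ℝ → ℝ → ℝ)
    (hf : ContinuousOn (fun p : ℝ × ℝ => f p.1 p.2) (Icc a b ×ˢ Icc (0:ℝ) T)) :
    Integrable (Function.uncurry f)
      ((volume.restrict (uIoc a b)).prod (volume.restrict (uIoc 0 T))) := by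
  rw [Measure.prod_restrict, uIoc_of_le hab, uIoc_of_le hT]
  have := hf.integrableOn_compact (μ := (volume : Measure ℝ).prod volume)
    (isCompact_Icc.prod isCompact_Icc)
  exact this.mono_set (prod_mono Ioc_subset_Icc_self Ioc_subset_Icc_self)

open MeasureTheory in
theorem aux_int (a b T : ℝ) (hab : a ≤ b) (hT : 0 ≤ T) (f : ℝ → ℝ → ℝ)
    (hf : ContinuousOn (fun p : ℝ × ℝ => f p.1 p.2) (Icc a b ×ˢ Icc (0:ℝ) T)) :
    IntervalIntegrable (fun t => ∫ y in a..b, f y t) volume 0 T := by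
  have h := (aux_prod_integrable a b T hab hT f hf).integral_prod_right
  rw [intervalIntegrable_iff]
  simp only [intervalIntegral.integral_of_le hab]
  rw [uIoc_of_le hab] at h
  exact h

theorem aux_slice (a b T t : ℝ) (ht : t ∈ Icc 0 T) (f : ℝ → ℝ → ℝ)
    (hf : ContinuousOn (fun p : ℝ × ℝ => f p.1 p.2) (Icc a b ×ˢ Icc (0:ℝ) T)) :
    ContinuousOn (fun y => f y t) (Icc a b) :=
  hf.comp (f := fun y : ℝ => (y, t)) (by fun_prop) (fun y hy => ⟨hy, ht⟩)

theorem aux_slice' (a b T y : ℝ) (hy : y ∈ Icc a b) (f : ℝ → ℝ → ℝ)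
    (hf : ContinuousOn (fun p : ℝ × ℝ => f p.1 p.2) (Icc a b ×ˢ Icc (0:ℝ) T)) :
    ContinuousOn (fun t => f y t) (Icc 0 T) :=
  hf.comp (f := fun t : ℝ => (y, t)) (by fun_prop) (fun t ht => ⟨hy, ht⟩)

open MeasureTheory in
theorem aux_ftc (a b T : ℝ) (hab : a ≤ b) (hT : 0 ≤ T) (w : ℝ → ℝ) (hw : Continuous w)
    (Φ D : ℝ → ℝ → ℝ)
    (hΦ : ContinuousOn (fun p : ℝ × ℝ => Φ p.1 p.2) (Icc a b ×ˢ Icc (0:ℝ) T))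
    (hD : ContinuousOn (fun p : ℝ × ℝ => D p.1 p.2) (Icc a b ×ˢ Icc (0:ℝ) T))
    (hd : ∀ y ∈ Icc a b, ∀ t ∈ Ioo 0 T, HasDerivAt (fun t' => Φ y t') (D y t) t) :
    (∫ y in a..b, w y * Φ y T) - (∫ y in a..b, w y * Φ y 0)
      = ∫ t in (0:ℝ)..T, ∫ y in a..b, w y * D y t := by
  have hwD : ContinuousOn (fun p : ℝ × ℝ => w p.1 * D p.1 p.2) (Icc a b ×ˢ Icc (0:ℝ) T) :=
    (by fun_prop : Continuous fun p : ℝ × ℝ => w p.1).continuousOn.mul hD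
  have hpi := aux_prod_integrable a b T hab hT (fun y t => w y * D y t) hwD
  rw [Measure.prod_restrict] at hpi
  rw [← intervalIntegral_intervalIntegral_swap hpi,
    ← intervalIntegral.integral_sub]
  · apply intervalIntegral.integral_congr
    intro y hy
    rw [uIcc_of_le hab] at hy
    simp only [intervalIntegral.integral_const_mul]
    rw [intervalIntegral.integral_eq_sub_of_hasDerivAt_of_le hT (aux_slice' a b T y hy Φ hΦ)
      (hd y hy)]
    · ring
    · exact (aux_slice' a b T y hy D hD).intervalIntegrable_of_Icc hT
  · exact (hw.continuousOn.mul
      (aux_slice a b T T ⟨hT, le_rfl⟩ Φ hΦ)).intervalIntegrable_of_Icc hab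
  · exact (hw.continuousOn.mul
      (aux_slice a b T 0 ⟨le_rfl, hT⟩ Φ hΦ)).intervalIntegrable_of_Icc hab

theorem hr_cont (ε : ℝ) : Continuous (heavisideReg ε) := by
  unfold heavisideReg
  fun_prop

theorem hr_mem (ε s : ℝ) : 0 ≤ heavisideReg ε s ∧ heavisideReg ε s ≤ 1 := by
  unfold heavisideReg
  exact ⟨le_max_left _ _, max_le zero_le_one (min_le_left _ _)⟩

theorem hr_one (ε s : ℝ) (hε : 0 < ε) (h : ε ≤ s) : heavisideReg ε s = 1 := by
  unfold heavisideReg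
  have : 1 ≤ (s + ε) / (2 * ε) := by
    rw [le_div_iff₀ (by positivity)]; linarith
  rw [min_eq_left this]; simp

theorem hr_zero (ε s : ℝ) (hε : 0 < ε) (h : s ≤ -ε) : heavisideReg ε s = 0 := by
  unfold heavisideReg
  have : (s + ε) / (2 * ε) ≤ 0 := div_nonpos_of_nonpos_of_nonneg (by linarith) (by positivity)
  rw [max_eq_left]
  exact (min_le_right _ _).trans this

theorem hr_eq (ε s s0 z : ℝ) (hε : 0 < ε) (h0 : 0 < s0) (hs : s0 ≤ s) (hz : ε / s0 < |z|) :
    heavisideReg ε (s * z) = heavisideReg ε (s0 * z) := by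
  rw [div_lt_iff₀ h0] at hz
  rcases le_total 0 z with h | h
  · rw [abs_of_nonneg h] at hz
    rw [hr_one _ _ hε, hr_one _ _ hε] <;> nlinarith
  · rw [abs_of_nonpos h] at hz
    rw [hr_zero _ _ hε, hr_zero _ _ hε] <;> nlinarith

/-- Lagrangian profile. -/
noncomputable def prof (y : ℝ) : ℝ := 2 * max 0 (1 - y ^ 2 / 12)

theorem prof_cont : Continuous prof := by unfold prof; fun_prop

theorem prof_bd (y : ℝ) : |prof y| ≤ 2 := by
  unfold prof
  have h1 : 0 ≤ max 0 (1 - y ^ 2 / 12) := le_max_left _ _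
  have h2 : max 0 (1 - y ^ 2 / 12) ≤ 1 := max_le zero_le_one (by nlinarith [sq_nonneg y])
  rw [abs_of_nonneg (by positivity)]
  linarith

theorem prof_zero (y : ℝ) (h : 12 ≤ y ^ 2) : prof y = 0 := by
  unfold prof
  rw [max_eq_left (by linarith)]; simp

/-- Abstract Lagrangian estimate. -/
theorem lagr (c T y0 s0 : ℝ) (hc : 0 ≤ c) (hT : 0 < T) (hs0 : 0 < s0) (s : ℝ → ℝ)
    (hs : ∀ t ∈ Icc 0 T, s0 ≤ s t) (hs00 : s 0 = s0) (hsc : ContinuousOn s (Icc 0 T))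
    (Φ D : ℝ → ℝ → ℝ)
    (hΦ : ContinuousOn (fun p : ℝ × ℝ => Φ p.1 p.2) (Icc (-c) c ×ˢ Icc (0:ℝ) T))
    (hD : ContinuousOn (fun p : ℝ × ℝ => D p.1 p.2) (Icc (-c) c ×ˢ Icc (0:ℝ) T))
    (hd : ∀ y ∈ Icc (-c) c, ∀ t ∈ Ioo 0 T, HasDerivAt (fun t' => Φ y t') (D y t) t) :
    ∃ C > (0:ℝ), ∀ ε : ℝ, 0 < ε →
      |(∫ y in (-c)..c, heavisideReg ε (s T * (y - y0)) * prof y * Φ y T)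
        - (∫ y in (-c)..c, heavisideReg ε (s 0 * (y - y0)) * prof y * Φ y 0)
        - ∫ t in (0:ℝ)..T, ∫ y in (-c)..c,
            heavisideReg ε (s t * (y - y0)) * prof y * D y t| ≤ C * ε := by
  obtain ⟨M1, hM1⟩ := (isCompact_Icc.prod isCompact_Icc).exists_bound_of_continuousOn hΦ
  obtain ⟨M2, hM2⟩ := (isCompact_Icc.prod isCompact_Icc).exists_bound_of_continuousOn hD
  have hcc : -c ≤ c := by linarith
  have hM1' : ∀ y ∈ Icc (-c) c, ∀ t ∈ Icc 0 T, |Φ y t| ≤ |M1| := fun y hy t ht =>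
    (hM1 (y, t) ⟨hy, ht⟩).trans (le_abs_self _)
  have hM2' : ∀ y ∈ Icc (-c) c, ∀ t ∈ Icc 0 T, |D y t| ≤ |M2| := fun y hy t ht =>
    (hM2 (y, t) ⟨hy, ht⟩).trans (le_abs_self _)
  have hTT : T ∈ Icc 0 T := ⟨hT.le, le_rfl⟩
  have h0T : (0:ℝ) ∈ Icc 0 T := ⟨le_rfl, hT.le⟩
  refine ⟨(2 * |M1|) * (2 / s0) + (2 * |M2|) * (2 / s0) * T + 1, by positivity, ?_⟩
  intro ε hε
  have hδ : 0 ≤ ε / s0 := by positivity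
  set w : ℝ → ℝ := fun y => heavisideReg ε (s0 * (y - y0)) * prof y with hwdef
  have hwc : Continuous w :=
    ((hr_cont ε).comp (by fun_prop : Continuous fun y : ℝ => s0 * (y - y0))).mul prof_cont
  have key := aux_ftc (-c) c T hcc hT.le w hwc Φ D hΦ hD hd
  have hgen : ∀ t ∈ Icc 0 T, ∀ g : ℝ → ℝ, ∀ M : ℝ, 0 ≤ M → (∀ y ∈ Icc (-c) c, |g y| ≤ M) →
      |∫ y in (-c)..c, (heavisideReg ε (s t * (y - y0)) * prof y * g y - w y * g y)|
        ≤ (2 * M) * (2 * (ε / s0)) := by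
    intro t ht g M hM hg
    apply aux_bound (-c) c y0 (ε / s0) (2 * M) hcc hδ (by positivity)
    · intro y hy
      have e : heavisideReg ε (s t * (y - y0)) * prof y * g y - w y * g y
        = (heavisideReg ε (s t * (y - y0)) - heavisideReg ε (s0 * (y - y0))) * (prof y * g y) := by
        simp only [hwdef]; ring
      have h1 : |heavisideReg ε (s t * (y - y0)) - heavisideReg ε (s0 * (y - y0))| ≤ 1 := by
        have := hr_mem ε (s t * (y - y0))
        have := hr_mem ε (s0 * (y - y0))
        rw [abs_le]; constructor <;> linarith
      rw [e, abs_mul, abs_mul]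
      calc _ ≤ 1 * (2 * M) := by
            gcongr
            · exact prof_bd y
            · exact hg y hy
        _ = 2 * M := one_mul _
    · intro y hy
      simp only [hwdef]
      rw [hr_eq ε (s t) s0 (y - y0) hε hs0 (hs t ht) hy]; ring
  have hWc : ContinuousOn (fun p : ℝ × ℝ => heavisideReg ε (s p.2 * (p.1 - y0)) * prof p.1)
      (Icc (-c) c ×ˢ Icc (0:ℝ) T) := by
    apply ContinuousOn.mul
    · apply (hr_cont ε).comp_continuousOn
      apply ContinuousOn.mul
      · exact hsc.comp continuousOn_snd (fun p hp => hp.2)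
      · fun_prop
    · exact (prof_cont.comp continuous_fst).continuousOn
  have hwD : ContinuousOn (fun p : ℝ × ℝ => w p.1 * D p.1 p.2) (Icc (-c) c ×ˢ Icc (0:ℝ) T) :=
    (by fun_prop : Continuous fun p : ℝ × ℝ => w p.1).continuousOn.mul hD
  have hWD := hWc.mul hD
  have hWΦ := hWc.mul hΦ
  have hwΦ : ContinuousOn (fun p : ℝ × ℝ => w p.1 * Φ p.1 p.2) (Icc (-c) c ×ˢ Icc (0:ℝ) T) :=
    (by fun_prop : Continuous fun p : ℝ × ℝ => w p.1).continuousOn.mul hΦ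
  have e1 : (∫ y in (-c)..c, heavisideReg ε (s T * (y - y0)) * prof y * Φ y T)
      - (∫ y in (-c)..c, w y * Φ y T)
      = ∫ y in (-c)..c, (heavisideReg ε (s T * (y - y0)) * prof y * Φ y T - w y * Φ y T) := by
    rw [intervalIntegral.integral_sub]
    · exact (aux_slice (-c) c T T hTT (fun y t => heavisideReg ε (s t * (y - y0)) * prof y * Φ y t)
        hWΦ).intervalIntegrable_of_Icc hcc
    · exact (aux_slice (-c) c T T hTT (fun y t => w y * Φ y t)
        hwΦ).intervalIntegrable_of_Icc hcc
  have e2 : (∫ t in (0:ℝ)..T, ∫ y in (-c)..c, heavisideReg ε (s t * (y - y0)) * prof y * D y t)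
      - (∫ t in (0:ℝ)..T, ∫ y in (-c)..c, w y * D y t)
      = ∫ t in (0:ℝ)..T, ∫ y in (-c)..c,
        (heavisideReg ε (s t * (y - y0)) * prof y * D y t - w y * D y t) := by
    rw [← intervalIntegral.integral_sub]
    · apply intervalIntegral.integral_congr
      intro t ht
      rw [uIcc_of_le hT.le] at ht
      simp only
      rw [intervalIntegral.integral_sub]
      · exact (aux_slice (-c) c T t ht (fun y t => heavisideReg ε (s t * (y - y0)) * prof y * D y t)
          hWD).intervalIntegrable_of_Icc hcc
      · exact (aux_slice (-c) c T t ht (fun y t => w y * D y t)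
          hwD).intervalIntegrable_of_Icc hcc
    · exact aux_int (-c) c T hcc hT.le
        (fun y t => heavisideReg ε (s t * (y - y0)) * prof y * D y t) hWD
    · exact aux_int (-c) c T hcc hT.le (fun y t => w y * D y t) hwD
  have b1 := hgen T hTT (fun y => Φ y T) |M1| (abs_nonneg _) (fun y hy => hM1' y hy T hTT)
  have b2 : ‖∫ t in (0:ℝ)..T, ∫ y in (-c)..c,
        (heavisideReg ε (s t * (y - y0)) * prof y * D y t - w y * D y t)‖
      ≤ (2 * |M2|) * (2 * (ε / s0)) * |T - 0| := by
    apply intervalIntegral.norm_integral_le_of_norm_le_const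
    intro t ht
    rw [uIoc_of_le hT.le] at ht
    have ht' : t ∈ Icc 0 T := ⟨ht.1.le, ht.2⟩
    exact hgen t ht' (fun y => D y t) |M2| (abs_nonneg _) (fun y hy => hM2' y hy t ht')
  rw [Real.norm_eq_abs, sub_zero, abs_of_pos hT, ← e2] at b2
  rw [← e1] at b1
  rw [hs00]
  have e3 : (∫ y in (-c)..c, heavisideReg ε (s0 * (y - y0)) * prof y * Φ y 0)
    = ∫ y in (-c)..c, w y * Φ y 0 := rfl
  rw [e3]
  have e4 : ((2 * |M1|) * (2 / s0) + (2 * |M2|) * (2 / s0) * T + 1) * ε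
    = (2 * |M1|) * (2 * (ε / s0)) + (2 * |M2|) * (2 * (ε / s0)) * T + ε := by
    field_simp
  rw [e4]
  rw [abs_le] at b1 b2 ⊢
  constructor <;> linarith [b1.1, b1.2, b2.1, b2.2]

/-- Chain rule from continuous partials. -/
theorem chain (R T : ℝ) (φ φx φt : ℝ → ℝ → ℝ)
    (hφx : ∀ x ∈ Icc (-R) R, ∀ t ∈ Icc (0:ℝ) T,
      HasDerivAt (fun x' => φ x' t) (φx x t) x)
    (hφt : ∀ x ∈ Icc (-R) R, ∀ t ∈ Icc (0:ℝ) T,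
      HasDerivAt (fun t' => φ x t') (φt x t) t)
    (hφxc : ContinuousOn (fun p : ℝ × ℝ => φx p.1 p.2) (Icc (-R) R ×ˢ Icc (0:ℝ) T))
    (hφtc : ContinuousOn (fun p : ℝ × ℝ => φt p.1 p.2) (Icc (-R) R ×ˢ Icc (0:ℝ) T))
    (X : ℝ → ℝ) (X' t : ℝ) (ht : t ∈ Ioo 0 T) (hX : X t ∈ Ioo (-R) R) (hd : HasDerivAt X X' t) :
    HasDerivAt (fun t' => φ (X t') t') (φt (X t) t + X' * φx (X t) t) t := by
  have hn : Icc (-R) R ×ˢ Icc (0:ℝ) T ∈ nhds (X t, t) :=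
    prod_mem_nhds (Icc_mem_nhds hX.1 hX.2) (Icc_mem_nhds ht.1 ht.2)
  have h := hasStrictFDerivAt_uncurry_coprod (𝕜 := ℝ) (u := (X t, t)) (f := φ)
    (f₁ := fun x t => ContinuousLinearMap.toSpanSingleton ℝ (φx x t))
    (f₂ := fun x t => ContinuousLinearMap.toSpanSingleton ℝ (φt x t))
    (by
      filter_upwards [hn] with v hv
      exact (hφx v.1 hv.1 v.2 hv.2).hasFDerivAt)
    (by
      filter_upwards [hn] with v hv
      exact (hφt v.1 hv.1 v.2 hv.2).hasFDerivAt)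
    ((ContinuousLinearMap.toSpanSingletonCLE (𝕜 := ℝ) (E := ℝ)).continuous.continuousAt.comp
      (hφxc.continuousAt hn))
    ((ContinuousLinearMap.toSpanSingletonCLE (𝕜 := ℝ) (E := ℝ)).continuous.continuousAt.comp
      (hφtc.continuousAt hn))
  have h2 := HasFDerivAt.comp_hasDerivAt (f := fun t' => (X t', t')) t h.hasFDerivAt
    (hd.prodMk (hasDerivAt_id t))
  refine h2.congr_deriv ?_
  simp [Function.HasUncurry.uncurry]
  ring

/-- Change of variables. -/
theorem cov (ts R t s y0 η ε : ℝ) (hs : 0 < s) (hR : Real.sqrt 12 * s < R)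
    (hm1 : (t + ts) ^ (-(1:ℝ)/3) = s⁻¹) (hm2 : (t + ts) ^ (-(2:ℝ)/3) = (s ^ 2)⁻¹)
    (hη : η = s * y0) (g : ℝ → ℝ) :
    (∫ x in (-R)..R, heavisideReg ε (x - η) * barenblatt ts x t * g x)
     = ∫ y in (-Real.sqrt 12)..(Real.sqrt 12), heavisideReg ε (s * (y - y0)) * prof y * g (s * y) := by
  have hB : ∀ y, s * barenblatt ts (s * y) t = prof y := by
    intro y
    unfold barenblatt prof
    rw [hm1, hm2]
    have : (s * y) ^ 2 / 12 * (s ^ 2)⁻¹ = y ^ 2 / 12 := by field_simp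
    rw [this]; field_simp
  have hsq : Real.sqrt 12 ^ 2 = 12 := Real.sq_sqrt (by norm_num)
  have hsp : 0 < Real.sqrt 12 := Real.sqrt_pos.2 (by norm_num)
  have hsupp : Function.support (fun x => heavisideReg ε (x - η) * barenblatt ts x t * g x)
      ⊆ Ioc (s * -Real.sqrt 12) (s * Real.sqrt 12) := by
    intro x hx
    have hb : barenblatt ts x t ≠ 0 := by
      intro h0; apply hx; simp [h0]
    by_contra hc
    apply hb
    have hxe : x = s * (x / s) := by field_simp
    have h3 := hB (x / s)
    rw [← hxe, prof_zero] at h3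
    · rcases mul_eq_zero.1 h3 with h | h
      · exact absurd h hs.ne'
      · exact h
    · rw [← hsq, sq_le_sq, abs_of_pos hsp, abs_div, abs_of_pos hs, le_div_iff₀ hs]
      by_contra hlt
      push Not at hlt
      rw [abs_lt] at hlt
      exact hc ⟨by linarith, by linarith⟩
  rw [intervalIntegral.integral_eq_integral_of_support_subset
      (hsupp.trans (Ioc_subset_Ioc (by linarith) (by linarith))),
    ← intervalIntegral.integral_eq_integral_of_support_subset hsupp,
    ← intervalIntegral.mul_integral_comp_mul_left, ← intervalIntegral.integral_const_mul]
  apply intervalIntegral.integral_congr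
  intro y _
  simp only
  rw [← hB y, hη, ← mul_sub]
  ring

/-- The regularized segregated component `u₁^ε(x,t) = H_ε(x - η(t)) B(x,t)` satisfies the
weak formulation of `∂_t u₁ = ∂_x (u₁ ∂_x B)` up to an error of order `ε`, uniformly for
small `ε`, for every `C¹` test function `φ` on `[-R,R] × [0,T]`. -/
theorem approx_weak_identity
    (ts R T x₀ : ℝ) (hts : 0 < ts) (hR : 0 < R) (hT : 0 < T)
    (hRT : Real.sqrt 12 * (T + ts) ^ ((1:ℝ)/3) < R)
    (hx₀ : x₀ ^ 2 < 12 * ts ^ ((2:ℝ)/3))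
    (η : ℝ → ℝ) (hη : ∀ t, η t = x₀ * ((t + ts) / ts) ^ ((1:ℝ)/3))
    (φ φx φt : ℝ → ℝ → ℝ)
    (hφx : ∀ x ∈ Icc (-R) R, ∀ t ∈ Icc (0:ℝ) T,
      HasDerivAt (fun x' => φ x' t) (φx x t) x)
    (hφt : ∀ x ∈ Icc (-R) R, ∀ t ∈ Icc (0:ℝ) T,
      HasDerivAt (fun t' => φ x t') (φt x t) t)
    (hφc : ContinuousOn (fun p : ℝ × ℝ => φ p.1 p.2) (Icc (-R) R ×ˢ Icc (0:ℝ) T))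
    (hφxc : ContinuousOn (fun p : ℝ × ℝ => φx p.1 p.2) (Icc (-R) R ×ˢ Icc (0:ℝ) T))
    (hφtc : ContinuousOn (fun p : ℝ × ℝ => φt p.1 p.2) (Icc (-R) R ×ˢ Icc (0:ℝ) T)) :
    ∃ C > (0:ℝ), ∃ ε₀ > (0:ℝ), ∀ ε : ℝ, 0 < ε → ε ≤ ε₀ →
      |(∫ x in (-R)..R, heavisideReg ε (x - η T) * barenblatt ts x T * φ x T)
        - (∫ x in (-R)..R, heavisideReg ε (x - η 0) * barenblatt ts x 0 * φ x 0)
        - ∫ t in (0:ℝ)..T, ∫ x in (-R)..R,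
            heavisideReg ε (x - η t) * barenblatt ts x t
              * (φt x t - Gvel ts x t * φx x t)|
        ≤ C * ε := by
  set s : ℝ → ℝ := fun t => (t + ts) ^ ((1:ℝ)/3) with hsdef
  have hpos : ∀ t ∈ Icc (0:ℝ) T, 0 < t + ts := fun t ht => by linarith [ht.1]
  have hspos : ∀ t ∈ Icc (0:ℝ) T, 0 < s t := fun t ht => Real.rpow_pos_of_pos (hpos t ht) _
  have hs2 : ∀ t ∈ Icc (0:ℝ) T, (t + ts) ^ ((2:ℝ)/3) = s t ^ 2 := by
    intro t ht
    simp only [hsdef]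
    rw [← Real.rpow_natCast, ← Real.rpow_mul (hpos t ht).le]; norm_num
  have hm1 : ∀ t ∈ Icc (0:ℝ) T, (t + ts) ^ (-(1:ℝ)/3) = (s t)⁻¹ := by
    intro t ht
    simp only [hsdef]
    rw [← Real.rpow_neg (hpos t ht).le]; norm_num
  have hm2 : ∀ t ∈ Icc (0:ℝ) T, (t + ts) ^ (-(2:ℝ)/3) = (s t ^ 2)⁻¹ := by
    intro t ht
    rw [← hs2 t ht, ← Real.rpow_neg (hpos t ht).le]; norm_num
  have hmono : ∀ t ∈ Icc (0:ℝ) T, ∀ t' ∈ Icc (0:ℝ) T, t ≤ t' → s t ≤ s t' := by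
    intro t ht t' _ h
    exact Real.rpow_le_rpow (hpos t ht).le (by linarith) (by norm_num)
  have hsd : ∀ t ∈ Icc (0:ℝ) T, HasDerivAt s (s t / (3 * (t + ts))) t := by
    intro t ht
    have h1 : HasDerivAt (fun t : ℝ => t + ts) 1 t := (hasDerivAt_id t).add_const ts
    have h2 := h1.rpow_const (p := (1:ℝ)/3) (Or.inl (hpos t ht).ne')
    refine h2.congr_deriv ?_
    rw [Real.rpow_sub (hpos t ht), Real.rpow_one]
    simp only [hsdef]
    have := (hpos t ht).ne'
    field_simp
  have hsc : ContinuousOn s (Icc 0 T) := fun t ht => (hsd t ht).continuousAt.continuousWithinAt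
  have hTT : T ∈ Icc 0 T := ⟨hT.le, le_rfl⟩
  have h0T : (0:ℝ) ∈ Icc 0 T := ⟨le_rfl, hT.le⟩
  set c := Real.sqrt 12 with hc
  have hsq : c ^ 2 = 12 := Real.sq_sqrt (by norm_num)
  have hcp : 0 < c := Real.sqrt_pos.2 (by norm_num)
  have hcR : ∀ t ∈ Icc (0:ℝ) T, c * s t < R := by
    intro t ht
    refine lt_of_le_of_lt ?_ hRT
    exact mul_le_mul_of_nonneg_left (hmono t ht T hTT ht.2) hcp.le
  set y0 := x₀ / s 0 with hy0
  have hη' : ∀ t ∈ Icc (0:ℝ) T, η t = s t * y0 := by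
    intro t ht
    rw [hη, Real.div_rpow (hpos t ht).le hts.le, hy0]
    simp only [hsdef, zero_add]
    ring
  have hin : ∀ y ∈ Icc (-c) c, ∀ t ∈ Icc (0:ℝ) T, s t * y ∈ Ioo (-R) R := by
    intro y hy t ht
    have h1 := hcR t ht
    have h2 := hspos t ht
    constructor <;> nlinarith [hy.1, hy.2]
  have hmaps : MapsTo (fun p : ℝ × ℝ => (s p.2 * p.1, p.2)) (Icc (-c) c ×ˢ Icc (0:ℝ) T)
      (Icc (-R) R ×ˢ Icc (0:ℝ) T) := fun p hp =>
    ⟨Ioo_subset_Icc_self (hin p.1 hp.1 p.2 hp.2), hp.2⟩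
  have hs2c : ContinuousOn (fun p : ℝ × ℝ => s p.2) (Icc (-c) c ×ˢ Icc (0:ℝ) T) :=
    hsc.comp continuousOn_snd (fun p hp => hp.2)
  have hmc : ContinuousOn (fun p : ℝ × ℝ => (s p.2 * p.1, p.2)) (Icc (-c) c ×ˢ Icc (0:ℝ) T) :=
    (hs2c.mul continuousOn_fst).prodMk continuousOn_snd
  obtain ⟨C, hC, hmain⟩ := lagr c T y0 (s 0) hcp.le hT (hspos 0 h0T) s
    (fun t ht => hmono 0 h0T t ht ht.1) rfl hsc
    (fun y t => φ (s t * y) t)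
    (fun y t => φt (s t * y) t + (s t / (3 * (t + ts)) * y) * φx (s t * y) t)
    (hφc.comp hmc hmaps)
    ((hφtc.comp hmc hmaps).add (((hs2c.div (by fun_prop) (fun p hp => by
      have := hpos p.2 hp.2
      positivity)).mul continuousOn_fst).mul (hφxc.comp hmc hmaps)))
    (fun y hy t ht => chain R T φ φx φt hφx hφt hφxc hφtc (fun t => s t * y) _ t ht
      (hin y hy t (Ioo_subset_Icc_self ht)) ((hsd t (Ioo_subset_Icc_self ht)).mul_const y))
  refine ⟨C, hC, 1, one_pos, fun ε hε _ => ?_⟩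
  have hcov : ∀ t ∈ Icc (0:ℝ) T, ∀ g : ℝ → ℝ, _ := fun t ht g =>
    cov ts R t (s t) y0 (η t) ε (hspos t ht) (hcR t ht) (hm1 t ht) (hm2 t ht) (hη' t ht) g
  have e3 : (∫ t in (0:ℝ)..T, ∫ x in (-R)..R,
            heavisideReg ε (x - η t) * barenblatt ts x t
              * (φt x t - Gvel ts x t * φx x t))
      = ∫ t in (0:ℝ)..T, ∫ y in (-c)..c, heavisideReg ε (s t * (y - y0)) * prof y *
          (φt (s t * y) t + (s t / (3 * (t + ts)) * y) * φx (s t * y) t) := by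
    apply intervalIntegral.integral_congr
    intro t ht
    rw [uIcc_of_le hT.le] at ht
    simp only
    rw [hcov t ht (fun x => φt x t - Gvel ts x t * φx x t)]
    apply intervalIntegral.integral_congr
    intro y _
    simp only
    by_cases hy : 12 ≤ y ^ 2
    · rw [prof_zero y hy]; ring
    · have hG : Gvel ts (s t * y) t = -(s t * y) / (3 * (t + ts)) := by
        unfold Gvel
        rw [if_pos]
        rw [hs2 t ht, mul_pow]
        have := hspos t ht
        push Not at hy
        have h2 : 0 < s t ^ 2 := by positivity
        nlinarith
      rw [hG]
      ring
  rw [hcov T hTT (fun x => φ x T), hcov 0 h0T (fun x => φ x 0), e3]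
  exact hmain ε hε
end

section
/- Let t* > 0, R > 0, T > 0 with √12 (T+t*)^{1/3} < R, let x₀ satisfy x₀² < 12 t*^{2/3}, let B be the Barenblatt function B(x,t) = 2(t+t*)^{-1/3} · max(0, 1 − (x²/12)(t+t*)^{-2/3}), let η(t) = x₀((t+t*)/t*)^{1/3}, and let G(x,t) = −x/(3(t+t*)) if x² < 12(t+t*)^{2/3} and G(x,t) = 0 otherwise. Define u₁(x,t) = B(x,t) if x > η(t) and u₁(x,t) = 0 otherwise, and u₂(x,t) = B(x,t) − u₁(x,t). Then u₁ + u₂ = B on [−R,R] × [0,T], and for each i ∈ {1,2} and every continuously differentiable function φ : [−R,R] × [0,T] → ℝ, ∫_{−R}^{R} u_i(x,T) φ(x,T) dx − ∫_{−R}^{R} u_i(x,0) φ(x,0) dx − ∫₀^T ∫_{−R}^{R} u_i(x,t) ( ∂_t φ(x,t) − G(x,t) ∂_x φ(x,t) ) dx dt = 0. -/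
open Set intervalIntegral

/-- Integrate the FTC in time against a bounded weight. -/
lemma core_ftc (a T : ℝ) (ha : 0 < a) (hT : 0 < T) (F : ℝ → ℝ) (hF : Measurable F)
    (hFb : ∀ y, |F y| ≤ 2) (Φ D : ℝ → ℝ → ℝ)
    (hΦ : ContinuousOn (fun p : ℝ × ℝ => Φ p.1 p.2) (Icc (-a) a ×ˢ Icc (0:ℝ) T))
    (hD : ContinuousOn (fun p : ℝ × ℝ => D p.1 p.2) (Icc (-a) a ×ˢ Icc (0:ℝ) T))
    (hder : ∀ y ∈ Icc (-a) a, ∀ t ∈ Ioo (0:ℝ) T, HasDerivAt (Φ y) (D y t) t) :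
    (∫ y in (-a)..a, F y * Φ y T) - (∫ y in (-a)..a, F y * Φ y 0)
      = ∫ t in (0:ℝ)..T, ∫ y in (-a)..a, F y * D y t := by
  have haa : -a ≤ a := by linarith
  have slice : ∀ t ∈ Icc (0:ℝ) T,
      IntervalIntegrable (fun y => F y * Φ y t) MeasureTheory.volume (-a) a := by
    intro t ht
    have hc : ContinuousOn (fun y => Φ y t) (Icc (-a) a) :=
      hΦ.comp (f := fun y : ℝ => (y, t)) (by fun_prop) (fun y hy => ⟨hy, ht⟩)
    have hi : IntervalIntegrable (fun y => Φ y t) MeasureTheory.volume (-a) a :=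
      (by rwa [← uIcc_of_le haa] at hc : ContinuousOn _ (uIcc (-a) a)).intervalIntegrable
    rw [intervalIntegrable_iff] at hi ⊢
    exact hi.bdd_mul (c := 2) hF.aestronglyMeasurable (Filter.Eventually.of_forall hFb)
  rw [← intervalIntegral.integral_sub (slice T ⟨hT.le, le_rfl⟩) (slice 0 ⟨le_rfl, hT.le⟩)]
  have hint : MeasureTheory.Integrable (Function.uncurry fun t y => F y * D y t)
      ((MeasureTheory.volume.restrict (uIoc 0 T)).prod
        (MeasureTheory.volume.restrict (Ioc (-a) a))) := by
    rw [uIoc_of_le hT.le, MeasureTheory.Measure.prod_restrict]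
    have h1 : ContinuousOn (fun p : ℝ × ℝ => D p.2 p.1) (Icc (0:ℝ) T ×ˢ Icc (-a) a) :=
      hD.comp (f := fun p : ℝ × ℝ => (p.2, p.1)) (by fun_prop) (fun p hp => ⟨hp.2, hp.1⟩)
    have h2 := (h1.integrableOn_compact (μ := MeasureTheory.volume)
      (isCompact_Icc.prod isCompact_Icc)).mono_set
      (prod_mono (Ioc_subset_Icc_self (a := (0:ℝ)) (b := T))
        (Ioc_subset_Icc_self (a := -a) (b := a)))
    exact MeasureTheory.Integrable.bdd_mul (c := 2) (f := fun p : ℝ × ℝ => F p.2) h2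
      (hF.comp measurable_snd).aestronglyMeasurable
      (Filter.Eventually.of_forall fun p => hFb p.2)
  have hswap := MeasureTheory.intervalIntegral_integral_swap hint
  simp only [intervalIntegral.integral_of_le haa]
  rw [hswap]
  refine MeasureTheory.setIntegral_congr_fun measurableSet_Ioc ?_
  intro y hy
  have hy' : y ∈ Icc (-a) a := Ioc_subset_Icc_self hy
  have hc : ContinuousOn (fun t => Φ y t) (Icc 0 T) :=
    hΦ.comp (f := fun t : ℝ => (y, t)) (by fun_prop) (fun t ht => ⟨hy', ht⟩)
  have hd : ContinuousOn (fun t => D y t) (Icc 0 T) :=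
    hD.comp (f := fun t : ℝ => (y, t)) (by fun_prop) (fun t ht => ⟨hy', ht⟩)
  have hi : IntervalIntegrable (fun t => D y t) MeasureTheory.volume 0 T :=
    (by rwa [← uIcc_of_le hT.le] at hd : ContinuousOn _ (uIcc 0 T)).intervalIntegrable
  have := intervalIntegral.integral_eq_sub_of_hasDerivAt_of_le hT.le hc (hder y hy') hi
  simp only [intervalIntegral.integral_const_mul]
  rw [this]
  ring

/-- Chain rule along a curve, from continuous partial derivatives. -/
lemma chain_partial (R T : ℝ) (φ φx φt : ℝ → ℝ → ℝ)
    (hφx : ∀ x ∈ Icc (-R) R, ∀ t ∈ Icc (0:ℝ) T,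
      HasDerivAt (fun x' => φ x' t) (φx x t) x)
    (hφt : ∀ x ∈ Icc (-R) R, ∀ t ∈ Icc (0:ℝ) T,
      HasDerivAt (fun t' => φ x t') (φt x t) t)
    (hφxc : ContinuousOn (fun p : ℝ × ℝ => φx p.1 p.2) (Icc (-R) R ×ˢ Icc (0:ℝ) T))
    (hφtc : ContinuousOn (fun p : ℝ × ℝ => φt p.1 p.2) (Icc (-R) R ×ˢ Icc (0:ℝ) T))
    (X : ℝ → ℝ) (X' t : ℝ) (hX : HasDerivAt X X' t) (hXt : X t ∈ Ioo (-R) R)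
    (ht : t ∈ Ioo 0 T) :
    HasDerivAt (fun t => φ (X t) t) (φt (X t) t + X' * φx (X t) t) t := by
  have hn : Icc (-R) R ×ˢ Icc (0:ℝ) T ∈ nhds (X t, t) :=
    prod_mem_nhds (Icc_mem_nhds hXt.1 hXt.2) (Icc_mem_nhds ht.1 ht.2)
  have cx := hφxc.continuousAt hn
  have ct := hφtc.continuousAt hn
  let L : ℝ →L[ℝ] (ℝ →L[ℝ] ℝ) := ContinuousLinearMap.smulRightL ℝ ℝ ℝ 1
  have h := hasStrictFDerivAt_uncurry_coprod (𝕜 := ℝ) (u := (X t, t)) (f := φ)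
    (f₁ := fun x t => L (φx x t))
    (f₂ := fun x t => L (φt x t))
    (by
      filter_upwards [hn] with v hv
      exact (hφx v.1 hv.1 v.2 hv.2).hasFDerivAt)
    (by
      filter_upwards [hn] with v hv
      exact (hφt v.1 hv.1 v.2 hv.2).hasFDerivAt)
    (L.continuous.continuousAt.comp cx)
    (L.continuous.continuousAt.comp ct)
  have h2 := h.hasFDerivAt.comp_hasDerivAt (f := fun s => (X s, s)) t (hX.prodMk (hasDerivAt_id t))
  convert! h2 using 1
  simp [L, Function.HasUncurry.uncurry]
  ring

/-- Self-similar change of variables. -/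
lemma rescale (a R l : ℝ) (hl : 0 < l) (hlR : a * l < R) (F : ℝ → ℝ)
    (hFs : ∀ y, F y ≠ 0 → y ∈ Ioo (-a) a) (v g : ℝ → ℝ) (hv : ∀ x, v x = l⁻¹ * F (x / l)) :
    ∫ x in (-R)..R, v x * g x = ∫ y in (-a)..a, F y * g (l * y) := by
  have h1 : ∀ x, v x * g x = (fun y => l⁻¹ * (F y * g (l * y))) (x / l) := by
    intro x
    have : l * (x / l) = x := by field_simp
    simp only [hv, this]
    ring
  simp only [h1]
  rw [intervalIntegral.integral_comp_div (fun y => l⁻¹ * (F y * g (l * y))) hl.ne']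
  rw [intervalIntegral.integral_const_mul, smul_eq_mul, ← mul_assoc, mul_inv_cancel₀ hl.ne', one_mul]
  have haR : a < R / l := by rwa [lt_div_iff₀ hl]
  rw [intervalIntegral.integral_eq_integral_of_support_subset,
    intervalIntegral.integral_eq_integral_of_support_subset]
  · intro y hy
    exact Ioo_subset_Ioc_self (hFs y (left_ne_zero_of_mul hy))
  · intro y hy
    have := hFs y (left_ne_zero_of_mul hy)
    refine ⟨?_, by linarith [this.2]⟩
    rw [neg_div]
    linarith [this.1]

lemma weak_of_profile
    (ts R T : ℝ) (hts : 0 < ts) (hT : 0 < T)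
    (hRT : Real.sqrt 12 * (T + ts) ^ ((1:ℝ)/3) < R)
    (F : ℝ → ℝ) (hF : Measurable F) (hFb : ∀ y, |F y| ≤ 2)
    (hFs : ∀ y, F y ≠ 0 → y ∈ Ioo (-Real.sqrt 12) (Real.sqrt 12))
    (u : ℝ → ℝ → ℝ)
    (hu : ∀ x, ∀ t ∈ Icc (0:ℝ) T,
      u x t = ((t + ts) ^ ((1:ℝ)/3))⁻¹ * F (x / (t + ts) ^ ((1:ℝ)/3)))
    (φ φx φt : ℝ → ℝ → ℝ)
    (hφx : ∀ x ∈ Icc (-R) R, ∀ t ∈ Icc (0:ℝ) T,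
      HasDerivAt (fun x' => φ x' t) (φx x t) x)
    (hφt : ∀ x ∈ Icc (-R) R, ∀ t ∈ Icc (0:ℝ) T,
      HasDerivAt (fun t' => φ x t') (φt x t) t)
    (hφc : ContinuousOn (fun p : ℝ × ℝ => φ p.1 p.2) (Icc (-R) R ×ˢ Icc (0:ℝ) T))
    (hφxc : ContinuousOn (fun p : ℝ × ℝ => φx p.1 p.2) (Icc (-R) R ×ˢ Icc (0:ℝ) T))
    (hφtc : ContinuousOn (fun p : ℝ × ℝ => φt p.1 p.2) (Icc (-R) R ×ˢ Icc (0:ℝ) T)) :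
    (∫ x in (-R)..R, u x T * φ x T) - (∫ x in (-R)..R, u x 0 * φ x 0)
        - (∫ t in (0:ℝ)..T, ∫ x in (-R)..R,
            u x t * (φt x t - Gvel ts x t * φx x t)) = 0 := by
  obtain ⟨a, ha⟩ : ∃ a, a = Real.sqrt 12 := ⟨_, rfl⟩
  have ha0 : 0 < a := by rw [ha]; positivity
  have ha2 : a ^ 2 = 12 := by rw [ha]; exact Real.sq_sqrt (by norm_num)
  rw [← ha] at hRT hFs
  obtain ⟨l, hl⟩ : ∃ l : ℝ → ℝ, l = fun t => (t + ts) ^ ((1:ℝ)/3) := ⟨_, rfl⟩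
  have hlt : ∀ t, (t + ts) ^ ((1:ℝ)/3) = l t := fun t => by rw [hl]
  simp only [hlt] at hRT hu
  have hs : ∀ t ∈ Icc (0:ℝ) T, 0 < t + ts := fun t ht => by linarith [ht.1]
  have hl0 : ∀ t ∈ Icc (0:ℝ) T, 0 < l t := fun t ht => by
    rw [← hlt]; exact Real.rpow_pos_of_pos (hs t ht) _
  have hlR : ∀ t ∈ Icc (0:ℝ) T, a * l t < R := fun t ht => by
    refine lt_of_le_of_lt ?_ hRT
    refine mul_le_mul_of_nonneg_left ?_ ha0.le
    rw [← hlt, ← hlt]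
    exact Real.rpow_le_rpow (hs t ht).le (by linarith [ht.2]) (by norm_num)
  have hl2 : ∀ t ∈ Icc (0:ℝ) T, (t + ts) ^ ((2:ℝ)/3) = l t ^ 2 := fun t ht => by
    rw [← hlt, ← Real.rpow_natCast, ← Real.rpow_mul (hs t ht).le]; norm_num
  have hld : ∀ t ∈ Icc (0:ℝ) T, HasDerivAt l (l t / (3 * (t + ts))) t := fun t ht => by
    have := ((hasDerivAt_id t).add_const ts).rpow_const (p := (1:ℝ)/3) (Or.inl (hs t ht).ne')
    rw [hl]
    refine HasDerivAt.congr_deriv this ?_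
    change 1 * (1 / 3) * (t + ts) ^ ((1:ℝ)/3 - 1) = (t + ts) ^ ((1:ℝ)/3) / (3 * (t + ts))
    rw [Real.rpow_sub_one (hs t ht).ne']
    have := (hs t ht).ne'
    field_simp
  have hlc : ContinuousOn l (Icc 0 T) := fun t ht => (hld t ht).continuousAt.continuousWithinAt
  have hmem : ∀ y ∈ Icc (-a) a, ∀ t ∈ Icc (0:ℝ) T, l t * y ∈ Ioo (-R) R := by
    intro y hy t ht
    have h0 := hl0 t ht
    have h1 := hlR t ht
    constructor <;> nlinarith [hy.1, hy.2]
  have hmap : MapsTo (fun p : ℝ × ℝ => (l p.2 * p.1, p.2)) (Icc (-a) a ×ˢ Icc (0:ℝ) T)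
      (Icc (-R) R ×ˢ Icc (0:ℝ) T) := fun p hp =>
    ⟨Ioo_subset_Icc_self (hmem _ hp.1 _ hp.2), hp.2⟩
  have hlc2 : ContinuousOn (fun p : ℝ × ℝ => l p.2) (Icc (-a) a ×ˢ Icc (0:ℝ) T) :=
    hlc.comp continuousOn_snd (fun p hp => hp.2)
  have hmc : ContinuousOn (fun p : ℝ × ℝ => (l p.2 * p.1, p.2)) (Icc (-a) a ×ˢ Icc (0:ℝ) T) :=
    (hlc2.mul continuousOn_fst).prodMk continuousOn_snd
  have h0m : (0:ℝ) ∈ Icc (0:ℝ) T := ⟨le_rfl, hT.le⟩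
  have hTm : T ∈ Icc (0:ℝ) T := ⟨hT.le, le_rfl⟩
  have key := core_ftc a T ha0 hT F hF hFb (fun y t => φ (l t * y) t)
    (fun y t => φt (l t * y) t + (l t / (3 * (t + ts)) * y) * φx (l t * y) t)
    (hφc.comp hmc hmap)
    (by
      refine (hφtc.comp hmc hmap).add (ContinuousOn.mul (ContinuousOn.mul
        (hlc2.div (by fun_prop) ?_) continuousOn_fst) (hφxc.comp hmc hmap))
      intro p hp
      have := hs _ hp.2
      positivity)
    (by
      intro y hy t ht
      have ht' := Ioo_subset_Icc_self ht
      exact chain_partial R T φ φx φt hφx hφt hφxc hφtc (fun t => l t * y) _ t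
        ((hld t ht').mul_const y) (hmem y hy t ht') ht)
  rw [rescale a R (l T) (hl0 T hTm) (hlR T hTm) F hFs (fun x => u x T) (fun x => φ x T)
      (fun x => hu x T hTm),
    rescale a R (l 0) (hl0 0 h0m) (hlR 0 h0m) F hFs (fun x => u x 0) (fun x => φ x 0)
      (fun x => hu x 0 h0m), key, sub_eq_zero]
  refine intervalIntegral.integral_congr ?_
  intro t ht
  rw [uIcc_of_le hT.le] at ht
  simp only
  rw [rescale a R (l t) (hl0 t ht) (hlR t ht) F hFs (fun x => u x t)
    (fun x => φt x t - Gvel ts x t * φx x t) (fun x => hu x t ht)]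
  refine intervalIntegral.integral_congr ?_
  intro y _
  simp only
  by_cases hy : F y = 0
  · simp [hy]
  · have hy' := hFs y hy
    have h0 := hl0 t ht
    have hlt2 : (l t * y) ^ 2 < 12 * (t + ts) ^ ((2:ℝ)/3) := by
      rw [hl2 t ht, mul_pow, mul_comm]
      refine mul_lt_mul_of_pos_right ?_ (by positivity)
      rw [← ha2]
      exact sq_lt_sq' hy'.1 hy'.2
    rw [Gvel, if_pos hlt2]
    ring

/-- The segregated pair `u₁ = 1_{x > η(t)} B`, `u₂ = 1_{x < η(t)} B` built from the
Barenblatt solution and the contact-inhibition trajectory `η` satisfies `u₁ + u₂ = B` and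
is a weak solution of `∂_t u_i = ∂_x (u_i ∂_x (u₁ + u₂))` on `(-R,R) × (0,T)` with
no-flux boundary conditions, tested against `C¹` test functions. -/
theorem segregated_weak_solution
    (ts R T x₀ : ℝ) (hts : 0 < ts) (hR : 0 < R) (hT : 0 < T)
    (hRT : Real.sqrt 12 * (T + ts) ^ ((1:ℝ)/3) < R)
    (hx₀ : x₀ ^ 2 < 12 * ts ^ ((2:ℝ)/3))
    (η : ℝ → ℝ) (hη : ∀ t, η t = x₀ * ((t + ts) / ts) ^ ((1:ℝ)/3))
    (u₁ u₂ : ℝ → ℝ → ℝ)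
    (hu₁ : ∀ x t, u₁ x t = if η t < x then barenblatt ts x t else 0)
    (hu₂ : ∀ x t, u₂ x t = barenblatt ts x t - u₁ x t)
    (φ φx φt : ℝ → ℝ → ℝ)
    (hφx : ∀ x ∈ Icc (-R) R, ∀ t ∈ Icc (0:ℝ) T,
      HasDerivAt (fun x' => φ x' t) (φx x t) x)
    (hφt : ∀ x ∈ Icc (-R) R, ∀ t ∈ Icc (0:ℝ) T,
      HasDerivAt (fun t' => φ x t') (φt x t) t)
    (hφc : ContinuousOn (fun p : ℝ × ℝ => φ p.1 p.2) (Icc (-R) R ×ˢ Icc (0:ℝ) T))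
    (hφxc : ContinuousOn (fun p : ℝ × ℝ => φx p.1 p.2) (Icc (-R) R ×ˢ Icc (0:ℝ) T))
    (hφtc : ContinuousOn (fun p : ℝ × ℝ => φt p.1 p.2) (Icc (-R) R ×ˢ Icc (0:ℝ) T)) :
    (∀ x ∈ Icc (-R) R, ∀ t ∈ Icc (0:ℝ) T,
      u₁ x t + u₂ x t = barenblatt ts x t) ∧
    (∀ u ∈ ({u₁, u₂} : Set (ℝ → ℝ → ℝ)),
      (∫ x in (-R)..R, u x T * φ x T) - (∫ x in (-R)..R, u x 0 * φ x 0)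
        - (∫ t in (0:ℝ)..T, ∫ x in (-R)..R,
            u x t * (φt x t - Gvel ts x t * φx x t)) = 0) := by
  refine ⟨fun x _ t _ => by rw [hu₂]; ring, ?_⟩
  obtain ⟨P, hP⟩ : ∃ P : ℝ → ℝ, P = fun y => 2 * max 0 (1 - y ^ 2 / 12) := ⟨_, rfl⟩
  obtain ⟨c, hc⟩ : ∃ c : ℝ, c = x₀ / ts ^ ((1:ℝ)/3) := ⟨_, rfl⟩
  have hPm : Measurable P := by rw [hP]; fun_prop
  have hP0 : ∀ y, 0 ≤ P y := fun y => by rw [hP]; positivity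
  have hP2 : ∀ y, P y ≤ 2 := fun y => by
    have : max 0 (1 - y ^ 2 / 12) ≤ 1 := max_le (by norm_num) (by linarith [sq_nonneg y])
    rw [hP]; simp only; linarith
  have hPs : ∀ y, P y ≠ 0 → y ∈ Ioo (-Real.sqrt 12) (Real.sqrt 12) := by
    intro y hy
    have : y ^ 2 < 12 := by
      by_contra hcon
      apply hy
      rw [hP]
      simp only
      rw [max_eq_left (by linarith)]
      simp
    exact abs_lt.1 (Real.lt_sqrt_of_sq_lt (by rwa [sq_abs]))
  have hB : ∀ x, ∀ t ∈ Icc (0:ℝ) T, barenblatt ts x t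
      = ((t + ts) ^ ((1:ℝ)/3))⁻¹ * P (x / (t + ts) ^ ((1:ℝ)/3)) := by
    intro x t ht
    have hs : 0 < t + ts := by linarith [ht.1]
    have e1 : (t + ts) ^ (-(1:ℝ)/3) = ((t + ts) ^ ((1:ℝ)/3))⁻¹ := by
      rw [← Real.rpow_neg hs.le]; norm_num
    have e2 : (t + ts) ^ (-(2:ℝ)/3) = (((t + ts) ^ ((1:ℝ)/3)) ^ 2)⁻¹ := by
      rw [← Real.rpow_natCast, ← Real.rpow_mul hs.le, ← Real.rpow_neg hs.le]; norm_num
    rw [barenblatt, hP, e1, e2]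
    simp only
    rw [div_pow, div_mul_eq_mul_div, ← div_eq_mul_inv]
    ring
  have hcη : ∀ x, ∀ t ∈ Icc (0:ℝ) T, (η t < x ↔ c < x / (t + ts) ^ ((1:ℝ)/3)) := by
    intro x t ht
    have hs : 0 < t + ts := by linarith [ht.1]
    rw [lt_div_iff₀ (Real.rpow_pos_of_pos hs _), hη, hc, Real.div_rpow hs.le hts.le,
      mul_div_assoc', div_mul_eq_mul_div]
  have h1 : ∀ x, ∀ t ∈ Icc (0:ℝ) T, u₁ x t = ((t + ts) ^ ((1:ℝ)/3))⁻¹ *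
      (fun y => if c < y then P y else 0) (x / (t + ts) ^ ((1:ℝ)/3)) := by
    intro x t ht
    rw [hu₁, hB x t ht]
    simp only [hcη x t ht]
    split_ifs <;> simp
  have h2 : ∀ x, ∀ t ∈ Icc (0:ℝ) T, u₂ x t = ((t + ts) ^ ((1:ℝ)/3))⁻¹ *
      (fun y => if c < y then 0 else P y) (x / (t + ts) ^ ((1:ℝ)/3)) := by
    intro x t ht
    rw [hu₂, hu₁, hB x t ht]
    simp only [hcη x t ht]
    split_ifs <;> simp
  rintro u (rfl | rfl)
  · refine weak_of_profile ts R T hts hT hRT (fun y => if c < y then P y else 0) ?_ ?_ ?_ u h1 φ φx φt hφx hφt hφc hφxc hφtc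
    · exact Measurable.ite measurableSet_Ioi hPm measurable_const
    · intro y
      split_ifs
      · rw [abs_of_nonneg (hP0 y)]; exact hP2 y
      · simp
    · intro y hy
      apply hPs
      intro h
      simp [h] at hy
  · refine weak_of_profile ts R T hts hT hRT (fun y => if c < y then 0 else P y) ?_ ?_ ?_ u h2 φ φx φt hφx hφt hφc hφxc hφtc
    · exact Measurable.ite measurableSet_Ioi measurable_const hPm
    · intro y
      split_ifs
      · simp
      · rw [abs_of_nonneg (hP0 y)]; exact hP2 y
    · intro y hy
      apply hPs
      intro h
      simp [h] at hy
end
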